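/- Let A := { t·(1, 3, 9) : t ∈ ℤ/14ℤ } ⊆ (ℤ/14ℤ)³. Then A is an independent set of cardinality 14 in C_{5,14}^{⊠3}, α(C_{5,14}^{⊠3}) = 14, and the maximum independent set is unique up to Lee equivalence: for every independent set B ⊆ (ℤ/14ℤ)³ in C_{5,14}^{⊠3} with |B| = 14 there exist a permutation σ of {1,2,3}, signs ε₁, ε₂, ε₃ ∈ {+1, −1} and constants c₁, c₂, c₃ ∈ ℤ/14ℤ such that B = { (ε₁·a_{σ(1)} + c₁, ε₂·a_{σ(2)} + c₂, ε₃·a_{σ(3)} + c₃) : a ∈ A }. -/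

import Mathlib

/-- The circular (Lee) distance on `ℤ/qℤ`: `δ(x,y) = min(|x-y|, q-|x-y|)`,
with representatives taken in `{0,…,q-1}`. -/
def circDist (q : ℕ) (x y : ZMod q) : ℕ := min (x - y).val (y - x).val

/-- The code `A = { t·(1,3,9) : t ∈ ℤ/14ℤ } ⊆ (ℤ/14ℤ)³`. -/
def codeA : Finset (Fin 3 → ZMod 14) :=
  Finset.image (fun t : ZMod 14 => ![t, 3 * t, 9 * t]) Finset.univ

/-- A difference in `ℤ/14ℤ` of circular size at least 5. -/
def FarD (d : ZMod 14) : Prop := 5 ≤ min d.val (-d).val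

instance (d : ZMod 14) : Decidable (FarD d) := by unfold FarD; infer_instance

lemma far_iff (x y : ZMod 14) : 5 ≤ circDist 14 x y ↔ FarD (x - y) := by
  unfold circDist FarD
  rw [neg_sub]

lemma farD_neg (d : ZMod 14) : FarD (-d) ↔ FarD d := by
  revert d; decide

lemma farD_comm (x y : ZMod 14) : FarD (x - y) ↔ FarD (y - x) := by
  rw [← farD_neg, neg_sub]

lemma far_tri_aux : ∀ a b : ZMod 14, FarD a → FarD b → ¬ FarD (a + b) := by decide

/-- No three points are pairwise far. -/
lemma far_tri (x y z : ZMod 14) (h1 : FarD (y - x)) (h2 : FarD (z - y)) : ¬ FarD (z - x) := by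
  have := far_tri_aux _ _ h1 h2
  rwa [show y - x + (z - y) = z - x by ring] at this

lemma window_not_far_aux : ∀ a b : ZMod 14, a.val < 5 → b.val < 5 → ¬ FarD (a - b) := by decide

lemma window_not_far (w x y : ZMod 14) (hx : (x - w).val < 5) (hy : (y - w).val < 5) :
    ¬ FarD (x - y) := by
  have := window_not_far_aux _ _ hx hy
  rwa [show x - w - (y - w) = x - y by ring] at this

lemma near_cases : ∀ d : ZMod 14, ¬ FarD d → d ≠ 0 →
    d = 1 ∨ d = 2 ∨ d = 3 ∨ d = 4 ∨ d = -1 ∨ d = -2 ∨ d = -3 ∨ d = -4 := by decide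

/-- The part of `S` lying in the window `{w, …, w+4}` in coordinate `i`. -/
def win (S : Finset (Fin 3 → ZMod 14)) (i : Fin 3) (w : ZMod 14) : Finset (Fin 3 → ZMod 14) :=
  S.filter (fun u => (u i - w).val < 5)

lemma window_count : ∀ x : ZMod 14,
    (Finset.univ.filter (fun w : ZMod 14 => (x - w).val < 5)).card = 5 := by decide

lemma sum_win (S : Finset (Fin 3 → ZMod 14)) (i : Fin 3) :
    ∑ w : ZMod 14, (win S i w).card = 5 * S.card := by
  simp only [win, Finset.card_filter]
  rw [Finset.sum_comm]
  simp only [← Finset.card_filter, window_count]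
  simp [mul_comm]

lemma card_le_five (T : Finset (Fin 3 → ZMod 14)) (j k : Fin 3)
    (hT : ∀ u ∈ T, ∀ v ∈ T, u ≠ v → FarD (u j - v j) ∨ FarD (u k - v k)) : T.card ≤ 5 := by
  have h2 : ∀ w, (win T j w).card ≤ 2 := by
    intro w
    by_contra! hc
    obtain ⟨a, b, c, ha, hb, hc, hab, hac, hbc⟩ := Finset.two_lt_card_iff.mp hc
    simp only [win, Finset.mem_filter] at ha hb hc
    have key : ∀ u v : Fin 3 → ZMod 14, (u ∈ T ∧ (u j - w).val < 5) →
        (v ∈ T ∧ (v j - w).val < 5) → u ≠ v → FarD (u k - v k) := by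
      intro u v hu hv huv
      exact (hT u hu.1 v hv.1 huv).resolve_left (window_not_far w _ _ hu.2 hv.2)
    exact far_tri _ _ _ (key b a hb ha hab.symm) (key c b hc hb hbc.symm)
      (key c a hc ha hac.symm)
  have h3 := sum_win T j
  have h4 : ∑ w : ZMod 14, (win T j w).card ≤ ∑ _w : ZMod 14, 2 :=
    Finset.sum_le_sum (fun w _ => h2 w)
  simp at h4
  omega

/-- Independence in terms of differences. -/
def Indep (S : Finset (Fin 3 → ZMod 14)) : Prop :=
  ∀ u ∈ S, ∀ v ∈ S, u ≠ v → ∃ i : Fin 3, FarD (u i - v i)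

lemma fin3_others : ∀ i : Fin 3, ∃ j k : Fin 3, ∀ l : Fin 3, l = i ∨ l = j ∨ l = k := by decide

lemma win_le (S : Finset (Fin 3 → ZMod 14)) (hS : Indep S) (i : Fin 3) (w : ZMod 14) :
    (win S i w).card ≤ 5 := by
  obtain ⟨j, k, hjk⟩ := fin3_others i
  apply card_le_five _ j k
  intro u hu v hv huv
  simp only [win, Finset.mem_filter] at hu hv
  obtain ⟨l, hl⟩ := hS u hu.1 v hv.1 huv
  rcases hjk l with rfl | rfl | rfl
  · exact absurd hl (window_not_far w _ _ hu.2 hv.2)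
  · exact Or.inl hl
  · exact Or.inr hl

lemma card_le (S : Finset (Fin 3 → ZMod 14)) (hS : Indep S) : S.card ≤ 14 := by
  have h3 := sum_win S 0
  have h4 : ∑ w : ZMod 14, (win S 0 w).card ≤ ∑ _w : ZMod 14, 5 :=
    Finset.sum_le_sum (fun w _ => win_le S hS 0 w)
  simp at h4
  omega

lemma win_eq (S : Finset (Fin 3 → ZMod 14)) (hS : Indep S) (hc : S.card = 14) (i : Fin 3)
    (w : ZMod 14) : (win S i w).card = 5 := by
  have h3 := sum_win S i
  have h4 : ∑ w : ZMod 14, (win S i w).card = ∑ _w : ZMod 14, 5 := by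
    rw [h3, hc]; simp
  exact (Finset.sum_eq_sum_iff_of_le (fun w _ => win_le S hS i w)).mp h4 w (Finset.mem_univ w)

/-- A function on `ℤ/14ℤ` of period 5 is constant. -/
lemma const_of_period {α : Type*} (n : ZMod 14 → α) (h : ∀ t, n (t + 5) = n t) (t : ZMod 14) :
    n t = n 0 := by
  have h1 : ∀ t, n (t + 1) = n t := by
    intro t
    rw [← h t, ← h (t + 5), ← h (t + 5 + 5)]
    congr 1
    have : (5 : ZMod 14) + 5 + 5 = 1 := by decide
    rw [add_assoc, add_assoc, ← add_assoc 5 5 5, this]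
  have h2 : ∀ m : ℕ, n (m : ZMod 14) = n 0 := by
    intro m
    induction m with
    | zero => simp
    | succ m ih => rw [Nat.cast_succ, h1, ih]
  have := h2 t.val
  rwa [ZMod.natCast_zmod_val] at this

lemma window_split : ∀ d : ZMod 14,
    (if d.val < 5 then 1 else 0) + (if d = 5 then 1 else 0) =
      (if (d - 1).val < 5 then 1 else 0) + (if d = 0 then 1 else 0) := by decide

lemma fiber_one (S : Finset (Fin 3 → ZMod 14)) (hS : Indep S) (hc : S.card = 14) (i : Fin 3)
    (x : ZMod 14) : (S.filter (fun u => u i = x)).card = 1 := by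
  have hper : ∀ t, (S.filter (fun u => u i = t + 5)).card = (S.filter (fun u => u i = t)).card := by
    intro t
    have h1 := win_eq S hS hc i t
    have h2 := win_eq S hS hc i (t + 1)
    have h3 : (win S i t).card + (S.filter (fun u => u i = t + 5)).card =
        (win S i (t + 1)).card + (S.filter (fun u => u i = t)).card := by
      simp only [win, Finset.card_filter, ← Finset.sum_add_distrib]
      apply Finset.sum_congr rfl
      intro u _
      have := window_split (u i - t)
      simpa only [sub_eq_iff_eq_add, zero_add, sub_sub, add_comm 5 t] using this
    omega
  have hconst := const_of_period (fun t => (S.filter (fun u => u i = t)).card) hper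
  have hsum : S.card = ∑ t : ZMod 14, (S.filter (fun u => u i = t)).card :=
    Finset.card_eq_sum_card_fiberwise (fun _ _ => Finset.mem_coe.mpr (Finset.mem_univ _))
  simp only [hconst] at hsum
  simp [hc] at hsum
  have := hconst x
  omega

/-- Each coordinate parametrizes a maximum independent set. -/
lemma exists_param (S : Finset (Fin 3 → ZMod 14)) (hS : Indep S) (hc : S.card = 14) (i : Fin 3) :
    ∃ W : ZMod 14 → Fin 3 → ZMod 14, (∀ t, W t ∈ S) ∧ (∀ t, W t i = t) ∧
      ∀ u ∈ S, W (u i) = u := by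
  have h : ∀ t, ∃ u, S.filter (fun u => u i = t) = {u} := fun t =>
    Finset.card_eq_one.mp (fiber_one S hS hc i t)
  choose W hW using h
  have hm : ∀ t, W t ∈ S.filter (fun u => u i = t) := fun t => by rw [hW]; simp
  simp only [Finset.mem_filter] at hm
  refine ⟨W, fun t => (hm t).1, fun t => (hm t).2, fun u hu => ?_⟩
  have : u ∈ S.filter (fun v => v i = u i) := by simp [hu]
  rw [hW] at this
  exact (Finset.mem_singleton.mp this).symm

/-- Near exactly at differences 1, 4 (among 1, 2, 3, 4). -/
def PatA (f : ZMod 14 → ZMod 14) : Prop :=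
  ∀ t, ¬ FarD (f (t + 1) - f t) ∧ FarD (f (t + 2) - f t) ∧ FarD (f (t + 3) - f t) ∧
    ¬ FarD (f (t + 4) - f t)

/-- Near exactly at differences 2, 3 (among 1, 2, 3, 4). -/
def PatB (f : ZMod 14 → ZMod 14) : Prop :=
  ∀ t, FarD (f (t + 1) - f t) ∧ ¬ FarD (f (t + 2) - f t) ∧ ¬ FarD (f (t + 3) - f t) ∧
    FarD (f (t + 4) - f t)

/-- In two overlapping 5-windows without monochromatic triangles the end vertices see the
common part in the same way. -/
lemma slide (E : ZMod 14 → ZMod 14 → Prop) (t : ZMod 14)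
    (h : ∀ t, ∀ i j : ZMod 14, 0 < i.val → i.val < j.val → j.val < 5 →
      ¬ (E t (t + i) ∧ E (t + i) (t + j) ∧ E t (t + j)) ∧
        (E t (t + i) ∨ E (t + i) (t + j) ∨ E t (t + j))) :
    (E t (t + 1) ↔ E (t + 1) (t + 5)) ∧ (E t (t + 2) ↔ E (t + 2) (t + 5)) ∧
    (E t (t + 3) ↔ E (t + 3) (t + 5)) ∧ (E t (t + 4) ↔ E (t + 4) (t + 5)) := by
  have a1 := h t 1 2 (by decide) (by decide) (by decide)
  have a2 := h t 1 3 (by decide) (by decide) (by decide)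
  have a3 := h t 1 4 (by decide) (by decide) (by decide)
  have a4 := h t 2 3 (by decide) (by decide) (by decide)
  have a5 := h t 2 4 (by decide) (by decide) (by decide)
  have a6 := h t 3 4 (by decide) (by decide) (by decide)
  have b1 := h (t + 1) 1 2 (by decide) (by decide) (by decide)
  have b2 := h (t + 1) 1 3 (by decide) (by decide) (by decide)
  have b3 := h (t + 1) 1 4 (by decide) (by decide) (by decide)
  have b4 := h (t + 1) 2 3 (by decide) (by decide) (by decide)
  have b5 := h (t + 1) 2 4 (by decide) (by decide) (by decide)
  have b6 := h (t + 1) 3 4 (by decide) (by decide) (by decide)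
  have c1 := h (t + 2) 1 2 (by decide) (by decide) (by decide)
  have c2 := h (t + 2) 1 3 (by decide) (by decide) (by decide)
  have c3 := h (t + 2) 2 3 (by decide) (by decide) (by decide)
  have d1 := h (t + 3) 1 2 (by decide) (by decide) (by decide)
  simp only [add_assoc, show (1 : ZMod 14) + 1 = 2 by decide, show (1 : ZMod 14) + 2 = 3 by decide,
    show (1 : ZMod 14) + 3 = 4 by decide, show (1 : ZMod 14) + 4 = 5 by decide,
    show (2 : ZMod 14) + 1 = 3 by decide, show (2 : ZMod 14) + 2 = 4 by decide,
    show (2 : ZMod 14) + 3 = 5 by decide, show (3 : ZMod 14) + 1 = 4 by decide,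
    show (3 : ZMod 14) + 2 = 5 by decide] at *
  clear h
  generalize E t (t + 1) = e01 at *
  generalize E t (t + 2) = e02 at *
  generalize E t (t + 3) = e03 at *
  generalize E t (t + 4) = e04 at *
  generalize E (t + 1) (t + 2) = e12 at *
  generalize E (t + 1) (t + 3) = e13 at *
  generalize E (t + 1) (t + 4) = e14 at *
  generalize E (t + 1) (t + 5) = e15 at *
  generalize E (t + 2) (t + 3) = e23 at *
  generalize E (t + 2) (t + 4) = e24 at *
  generalize E (t + 2) (t + 5) = e25 at *
  generalize E (t + 3) (t + 4) = e34 at *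
  generalize E (t + 3) (t + 5) = e35 at *
  generalize E (t + 4) (t + 5) = e45 at *
  by_cases h12 : e12 <;> by_cases h13 : e13 <;> by_cases h14 : e14 <;>
    simp only [h12, h13, h14, true_and, false_and, and_true, and_false, true_or, false_or,
      or_true, or_false, not_false_iff] at * <;> grind

lemma sub_win_aux : ∀ i j : ZMod 14, 0 < i.val → i.val < j.val → j.val < 5 →
    0 < (j - i).val ∧ (j - i).val < 5 := by decide

lemma pat_exists (f g : ZMod 14 → ZMod 14)
    (h : ∀ t k : ZMod 14, 0 < k.val → k.val < 5 →
      FarD (f (t + k) - f t) ∨ FarD (g (t + k) - g t)) :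
    PatA f ∨ PatB f := by
  have hsl := fun t => slide (fun x y => FarD (f y - f x)) t (by
    intro t i j hi hij hj
    have h1 := h t i hi (by omega)
    have h2 := h t j (by omega) hj
    have h3 := h (t + i) (j - i) (sub_win_aux i j hi hij hj).1
      (sub_win_aux i j hi hij hj).2
    rw [show t + i + (j - i) = t + j by ring] at h3
    have h4 := far_tri (f t) (f (t + i)) (f (t + j))
    have h5 := far_tri (g t) (g (t + i)) (g (t + j))
    tauto)
  have ntri : ∀ t, ¬ (FarD (f (t + 1) - f t) ∧ FarD (f (t + 2) - f (t + 1)) ∧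
      FarD (f (t + 2) - f t)) ∧ (FarD (f (t + 1) - f t) ∨ FarD (f (t + 2) - f (t + 1)) ∨
      FarD (f (t + 2) - f t)) := by
    intro t
    have h1 := h t 1 (by decide) (by decide)
    have h2 := h t 2 (by decide) (by decide)
    have h3 := h (t + 1) 1 (by decide) (by decide)
    rw [add_assoc, show (1 : ZMod 14) + 1 = 2 by decide] at h3
    have h4 := far_tri (f t) (f (t + 1)) (f (t + 2))
    have h5 := far_tri (g t) (g (t + 1)) (g (t + 2))
    tauto
  -- the relation at difference `k`
  have e14 : ∀ t, FarD (f (t + 1 + 4) - f (t + 1)) ↔ FarD (f (t + 1) - f t) := fun t => by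
    rw [add_assoc, show (1 : ZMod 14) + 4 = 5 by decide]; exact (hsl t).1.symm
  have e23 : ∀ t, FarD (f (t + 2 + 3) - f (t + 2)) ↔ FarD (f (t + 2) - f t) := fun t => by
    rw [add_assoc, show (2 : ZMod 14) + 3 = 5 by decide]; exact (hsl t).2.1.symm
  have e32 : ∀ t, FarD (f (t + 3 + 2) - f (t + 3)) ↔ FarD (f (t + 3) - f t) := fun t => by
    rw [add_assoc, show (3 : ZMod 14) + 2 = 5 by decide]; exact (hsl t).2.2.1.symm
  have e41 : ∀ t, FarD (f (t + 4 + 1) - f (t + 4)) ↔ FarD (f (t + 4) - f t) := fun t => by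
    rw [add_assoc, show (4 : ZMod 14) + 1 = 5 by decide]; exact (hsl t).2.2.2.symm
  have p1 : ∀ t, FarD (f (t + 1) - f t) = FarD (f (0 + 1) - f 0) :=
    const_of_period (fun t => FarD (f (t + 1) - f t)) (fun t => propext (by
      have a := e41 (t + 1)
      rw [e14, add_assoc t 1 4, show (1 : ZMod 14) + 4 = 5 by decide] at a
      exact a))
  have p2 : ∀ t, FarD (f (t + 2) - f t) = FarD (f (0 + 2) - f 0) :=
    const_of_period (fun t => FarD (f (t + 2) - f t)) (fun t => propext (by
      have a := e32 (t + 2)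
      rw [e23, add_assoc t 2 3, show (2 : ZMod 14) + 3 = 5 by decide] at a
      exact a))
  have p3 : ∀ t, FarD (f (t + 3) - f t) = FarD (f (0 + 2) - f 0) := fun t => by
    rw [← propext (e32 t), p2]
  have p4 : ∀ t, FarD (f (t + 4) - f t) = FarD (f (0 + 1) - f 0) := fun t => by
    rw [← propext (e41 t), p1]
  have n0 := ntri 0
  have n1 : FarD (f (0 + 2) - f (0 + 1)) = FarD (f (0 + 1) - f 0) := by
    have := p1 (0 + 1)
    rwa [add_assoc 0 1 1, show (1 : ZMod 14) + 1 = 2 by decide] at this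
  rw [n1] at n0
  unfold PatA PatB
  simp only [p1, p2, p3, p4, forall_const]
  clear p1 p2 p3 p4 e14 e23 e32 e41 hsl ntri n1 h
  tauto

lemma pat_pair (f g : ZMod 14 → ZMod 14)
    (h : ∀ t k : ZMod 14, 0 < k.val → k.val < 5 →
      FarD (f (t + k) - f t) ∨ FarD (g (t + k) - g t)) :
    (PatA f ∧ PatB g) ∨ (PatB f ∧ PatA g) := by
  have hf := pat_exists f g h
  have hg := pat_exists g f (fun t k h1 h2 => (h t k h1 h2).symm)
  have h1 := h 0 1 (by decide) (by decide)
  have h2 := h 0 2 (by decide) (by decide)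
  rcases hf with hf | hf <;> rcases hg with hg | hg
  · have := hf 0; have := hg 0; tauto
  · exact Or.inl ⟨hf, hg⟩
  · exact Or.inr ⟨hf, hg⟩
  · have := hf 0; have := hg 0; tauto

lemma near_patA (f : ZMod 14 → ZMod 14) (hf : PatA f) (x y : ZMod 14) (hxy : ¬ FarD (x - y))
    (hne : x ≠ y) (hn : ¬ FarD (f x - f y)) :
    x - y = 1 ∨ x - y = 4 ∨ x - y = -1 ∨ x - y = -4 := by
  have hn' : ¬ FarD (f y - f x) := by rwa [farD_comm]
  have hx := hf x
  have hy := hf y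
  have key : ∀ k : ZMod 14, x - y = k → y + k = x := fun k hk => by rw [← hk]; ring
  have key2 : ∀ k : ZMod 14, x - y = -k → x + k = y := fun k hk => by
    rw [← neg_neg k, ← hk]; ring
  rcases near_cases _ hxy (sub_ne_zero.mpr hne) with h | h | h | h | h | h | h | h
  · tauto
  · rw [key 2 h] at hy; tauto
  · rw [key 3 h] at hy; tauto
  · tauto
  · tauto
  · rw [key2 2 h] at hx; tauto
  · rw [key2 3 h] at hx; tauto
  · tauto

lemma near_patB (f : ZMod 14 → ZMod 14) (hf : PatB f) (x y : ZMod 14) (hxy : ¬ FarD (x - y))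
    (hne : x ≠ y) (hn : ¬ FarD (f x - f y)) :
    x - y = 2 ∨ x - y = 3 ∨ x - y = -2 ∨ x - y = -3 := by
  have hn' : ¬ FarD (f y - f x) := by rwa [farD_comm]
  have hx := hf x
  have hy := hf y
  have key : ∀ k : ZMod 14, x - y = k → y + k = x := fun k hk => by rw [← hk]; ring
  have key2 : ∀ k : ZMod 14, x - y = -k → x + k = y := fun k hk => by
    rw [← neg_neg k, ← hk]; ring
  rcases near_cases _ hxy (sub_ne_zero.mpr hne) with h | h | h | h | h | h | h | h
  · rw [key 1 h] at hy; tauto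
  · tauto
  · tauto
  · rw [key 4 h] at hy; tauto
  · rw [key2 1 h] at hx; tauto
  · tauto
  · tauto
  · rw [key2 4 h] at hx; tauto

lemma smul_aux : ∀ a : ZMod 14, 14 • a = 0 := by decide

/-- A two-valued function with sum zero is constant if the difference of the values is a unit. -/
lemma const_of_sum (u : ZMod 14 → ZMod 14) (a b w : ZMod 14) (hw : w * (b - a) = 1)
    (hu : ∀ t, u t = a ∨ u t = b) (hs : ∑ t, u t = 0) : (∀ t, u t = a) ∨ (∀ t, u t = b) := by
  classical
  let n : ZMod 14 → ℕ := fun t => if u t = a then 0 else 1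
  have hn : ∀ t, u t = a + (b - a) * (n t : ZMod 14) := by
    intro t
    by_cases h : u t = a
    · simp [n, h]
    · have := (hu t).resolve_left h
      simp only [n, h, if_false]
      rw [this]; push_cast; ring
  have h0 : ((∑ t, n t : ℕ) : ZMod 14) = 0 := by
    have h1 : ∑ t, u t = (b - a) * ((∑ t, n t : ℕ) : ZMod 14) := by
      rw [Finset.sum_congr rfl (fun t _ => hn t), Finset.sum_add_distrib, ← Finset.mul_sum,
        Nat.cast_sum]
      have : ∑ _t : ZMod 14, a = 0 := by
        rw [Finset.sum_const, Finset.card_univ, ZMod.card]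
        exact smul_aux a
      rw [this, zero_add]
    rw [hs] at h1
    calc ((∑ t, n t : ℕ) : ZMod 14) = w * (b - a) * ((∑ t, n t : ℕ) : ZMod 14) := by
          rw [hw, one_mul]
      _ = 0 := by rw [mul_assoc, ← h1, mul_zero]
  rw [ZMod.natCast_eq_zero_iff] at h0
  have hle : ∀ t ∈ (Finset.univ : Finset (ZMod 14)), n t ≤ 1 := by
    intro t _
    simp only [n]; split_ifs <;> omega
  have hle2 := Finset.sum_le_sum hle
  have hs1 : ∑ _t : ZMod 14, 1 = 14 := by simp
  rw [hs1] at hle2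
  have hcase : ∑ t, n t = 0 ∨ ∑ t, n t = 14 := by omega
  rcases hcase with hc | hc
  · left
    intro t
    have := Finset.sum_eq_zero_iff.mp hc t (Finset.mem_univ t)
    rw [hn t, this]; simp
  · right
    intro t
    have := (Finset.sum_eq_sum_iff_of_le hle).mp (hc.trans hs1.symm) t (Finset.mem_univ t)
    rw [hn t, this]; push_cast; ring

lemma sum_diff (f : ZMod 14 → ZMod 14) (k : ZMod 14) : ∑ t, (f (t + k) - f t) = 0 := by
  rw [Finset.sum_sub_distrib, sub_eq_zero]
  exact Fintype.sum_equiv (Equiv.addRight k) _ _ (fun t => rfl)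

/-- A property preserved by `t ↦ t + 1` holds everywhere or nowhere. -/
lemma prop_const (p : ZMod 14 → Prop) (h : ∀ t, p t → p (t + 1)) :
    (∀ t, p t) ∨ (∀ t, ¬ p t) := by
  by_cases hp : ∃ t, p t
  · left
    obtain ⟨t, ht⟩ := hp
    have h2 : ∀ m : ℕ, p (t + (m : ZMod 14)) := by
      intro m
      induction m with
      | zero => simpa using ht
      | succ m ih =>
        rw [Nat.cast_succ, ← add_assoc]; exact h _ ih
    intro x
    have := h2 (x - t).val
    rwa [ZMod.natCast_zmod_val, add_sub_cancel] at this
  · right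
    push Not at hp
    exact hp

/-- Signed two-valued functions of constant sign and sum zero are constant. -/
lemma const_of_signed (u : ZMod 14 → ZMod 14) (a b w : ZMod 14) (hw : w * (b - a) = 1)
    (hu : ∀ t, u t = a ∨ u t = b ∨ u t = -a ∨ u t = -b)
    (hstep : ∀ t, (u t = a ∨ u t = b) → (u (t + 1) = a ∨ u (t + 1) = b))
    (hs : ∑ t, u t = 0) :
    (∀ t, u t = a) ∨ (∀ t, u t = b) ∨ (∀ t, u t = -a) ∨ (∀ t, u t = -b) := by
  rcases prop_const (fun t => u t = a ∨ u t = b) hstep with h | h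
  · rcases const_of_sum u a b w hw h hs with h | h <;> tauto
  · have h' : ∀ t, u t = -a ∨ u t = -b := fun t => by
      have := hu t; have := h t; tauto
    rcases const_of_sum u (-a) (-b) (-w) (by rw [← hw]; ring) h' hs with h | h <;> tauto

lemma linear_of_step (f : ZMod 14 → ZMod 14) (a : ZMod 14) (h : ∀ t, f (t + 1) - f t = a)
    (t : ZMod 14) : f t = a * t + f 0 := by
  have h2 : ∀ m : ℕ, f (m : ZMod 14) = a * m + f 0 := by
    intro m
    induction m with
    | zero => simp
    | succ m ih =>
      rw [Nat.cast_succ, ← sub_add_cancel (f (m + 1)) (f m), h, ih]; ring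
  have := h2 t.val
  rwa [ZMod.natCast_zmod_val] at this

lemma signAB : ∀ a b : ZMod 14, (a = 2 ∨ a = 3) → (b = 2 ∨ b = 3 ∨ b = -2 ∨ b = -3) →
    FarD (a + b) → (b = 2 ∨ b = 3) := by decide

lemma signAA : ∀ a b : ZMod 14, (a = 1 ∨ a = 4) → (b = 1 ∨ b = 4 ∨ b = -1 ∨ b = -4) →
    FarD (a + b) → (b = 1 ∨ b = 4) := by decide

lemma signBB : ∀ r q r' : ZMod 14, (r = 2 ∨ r = 3) → (q = 2 ∨ q = 3 ∨ q = -2 ∨ q = -3) →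
    (r' = 2 ∨ r' = 3 ∨ r' = -2 ∨ r' = -3) →
    FarD (q - r) → FarD (q - r') → (r' = 2 ∨ r' = 3) := by decide

lemma signBBq : ∀ r q q' : ZMod 14, (q = 2 ∨ q = 3) → (r = 2 ∨ r = 3 ∨ r = -2 ∨ r = -3) →
    (q' = 2 ∨ q' = 3 ∨ q' = -2 ∨ q' = -3) →
    FarD (q - r) → FarD (q' - r) → (q' = 2 ∨ q' = 3) := by decide

lemma one_near : ¬ FarD 1 ∧ ¬ FarD 2 ∧ ¬ FarD 3 ∧ ¬ FarD 4 := by decide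

lemma patA_linear (f g : ZMod 14 → ZMod 14) (hgf : ∀ t, g (f t) = t) (hf : PatA f)
    (hg : PatB g) : ∃ c, (∀ t, f t = 3 * t + c) ∨ (∀ t, f t = -3 * t + c) := by
  have hinj : Function.Injective f := Function.LeftInverse.injective hgf
  have hu : ∀ t, f (t + 1) - f t = 2 ∨ f (t + 1) - f t = 3 ∨ f (t + 1) - f t = -2 ∨
      f (t + 1) - f t = -3 := fun t =>
    near_patB g hg _ _ (hf t).1 (hinj.ne (by simp; decide)) (by
      rw [hgf, hgf, add_sub_cancel_left]; exact one_near.1)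
  have hsum2 : ∀ t, FarD (f (t + 1) - f t + (f (t + 1 + 1) - f (t + 1))) := fun t => by
    have := (hf t).2.1
    rw [show (2 : ZMod 14) = 1 + 1 by decide, ← add_assoc] at this
    convert this using 1; ring
  rcases const_of_signed (fun t => f (t + 1) - f t) 2 3 1 (by decide) hu
    (fun t ht => signAB _ _ ht (hu (t + 1)) (hsum2 t)) (sum_diff f 1) with h | h | h | h
  · have := hsum2 0
    rw [h, h] at this
    exact absurd this (by decide)
  · exact ⟨f 0, Or.inl (linear_of_step f 3 h)⟩
  · have := hsum2 0
    rw [h, h] at this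
    exact absurd this (by decide)
  · exact ⟨f 0, Or.inr (linear_of_step f (-3) h)⟩

lemma not_patAA (f g : ZMod 14 → ZMod 14) (hgf : ∀ t, g (f t) = t) (hf : PatA f)
    (hg : PatA g) : False := by
  have hinj : Function.Injective f := Function.LeftInverse.injective hgf
  have hu : ∀ t, f (t + 1) - f t = 1 ∨ f (t + 1) - f t = 4 ∨ f (t + 1) - f t = -1 ∨
      f (t + 1) - f t = -4 := fun t =>
    near_patA g hg _ _ (hf t).1 (hinj.ne (by simp; decide)) (by
      rw [hgf, hgf, add_sub_cancel_left]; exact one_near.1)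
  have hsum2 : ∀ t, FarD (f (t + 1) - f t + (f (t + 1 + 1) - f (t + 1))) := fun t => by
    have := (hf t).2.1
    rw [show (2 : ZMod 14) = 1 + 1 by decide, ← add_assoc] at this
    convert this using 1; ring
  have h3 := (hf 0).2.2.1
  rcases const_of_signed (fun t => f (t + 1) - f t) 1 4 5 (by decide) hu
    (fun t ht => signAA _ _ ht (hu (t + 1)) (hsum2 t)) (sum_diff f 1) with h | h | h | h <;>
  · rw [linear_of_step f _ h (0 + 3), linear_of_step f _ h 0] at h3
    have h2 := hsum2 0
    rw [h, h] at h2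
    generalize f 0 = c at h3
    revert h3 h2
    revert c
    decide

lemma not_patBB (f g : ZMod 14 → ZMod 14) (hgf : ∀ t, g (f t) = t) (hf : PatB f)
    (hg : PatB g) : False := by
  have hinj : Function.Injective f := Function.LeftInverse.injective hgf
  have hr : ∀ t, f (t + 2) - f t = 2 ∨ f (t + 2) - f t = 3 ∨ f (t + 2) - f t = -2 ∨
      f (t + 2) - f t = -3 := fun t =>
    near_patB g hg _ _ (hf t).2.1 (hinj.ne (by simp; decide)) (by
      rw [hgf, hgf, add_sub_cancel_left]; exact one_near.2.1)
  have hq : ∀ t, f (t + 3) - f t = 2 ∨ f (t + 3) - f t = 3 ∨ f (t + 3) - f t = -2 ∨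
      f (t + 3) - f t = -3 := fun t =>
    near_patB g hg _ _ (hf t).2.2.1 (hinj.ne (by simp; decide)) (by
      rw [hgf, hgf, add_sub_cancel_left]; exact one_near.2.2.1)
  have x1 : ∀ t, FarD (f (t + 3) - f t - (f (t + 2) - f t)) := fun t => by
    have := (hf (t + 2)).1
    rw [add_assoc, show (2 : ZMod 14) + 1 = 3 by decide] at this
    convert this using 1; ring
  have x2 : ∀ t, FarD (f (t + 3) - f t - (f (t + 1 + 2) - f (t + 1))) := fun t => by
    have := (hf t).1
    rw [add_assoc, show (1 : ZMod 14) + 2 = 3 by decide]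
    convert this using 1; ring
  have hrc := const_of_signed (fun t => f (t + 2) - f t) 2 3 1 (by decide) hr
    (fun t ht => signBB _ _ _ ht (hq t) (hr (t + 1)) (x1 t) (x2 t)) (sum_diff f 2)
  have hqc := const_of_signed (fun t => f (t + 3) - f t) 2 3 1 (by decide) hq
    (fun t ht => signBBq _ _ _ ht (hr (t + 1)) (hq (t + 1)) (x2 t) (x1 (t + 1))) (sum_diff f 3)
  have hfour : FarD (f (0 + 2) - f 0 + (f (0 + 2 + 2) - f (0 + 2))) := by
    have := (hf 0).2.2.2
    rw [add_assoc, show (2 : ZMod 14) + 2 = 4 by decide]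
    convert this using 1; ring
  have hsix : (f (0 + 2) - f 0) + (f (0 + 2 + 2) - f (0 + 2)) +
      (f (0 + 2 + 2 + 2) - f (0 + 2 + 2)) = (f (0 + 3) - f 0) + (f (0 + 3 + 3) - f (0 + 3)) := by
    rw [show (0 : ZMod 14) + 3 + 3 = 0 + 2 + 2 + 2 by decide]; ring
  have h1 := x1 0
  rcases hrc with h | h | h | h <;> rcases hqc with h' | h' | h' | h' <;>
  · simp only [h, h'] at hsix hfour h1
    revert hsix hfour h1
    decide

lemma image_of_param (B : Finset (Fin 3 → ZMod 14)) (W : ZMod 14 → Fin 3 → ZMod 14)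
    (hm : ∀ t, W t ∈ B) (hW : ∀ u ∈ B, W (u 0) = u) (σ : Equiv.Perm (Fin 3))
    (ε c : Fin 3 → ZMod 14)
    (h : ∀ t i, W t i = ε i * (![t, 3 * t, 9 * t] : Fin 3 → ZMod 14) (σ i) + c i) :
    B = codeA.image (fun a => fun i => ε i * a (σ i) + c i) := by
  ext u
  simp only [codeA, Finset.mem_image, Finset.mem_univ, true_and, exists_exists_eq_and]
  constructor
  · intro hu
    refine ⟨u 0, ?_⟩
    conv_rhs => rw [← hW u hu]
    funext i
    exact (h (u 0) i).symm
  · rintro ⟨t, rfl⟩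
    have : (fun i => ε i * (![t, 3 * t, 9 * t] : Fin 3 → ZMod 14) (σ i) + c i) = W t := by
      funext i
      exact (h t i).symm
    rw [this]
    exact hm t

lemma param_far (B : Finset (Fin 3 → ZMod 14)) (hB : Indep B) (W : ZMod 14 → Fin 3 → ZMod 14)
    (i j k : Fin 3) (hijk : ∀ l : Fin 3, l = i ∨ l = j ∨ l = k)
    (hm : ∀ t, W t ∈ B) (hi : ∀ t, W t i = t) (t d : ZMod 14) (h0 : 0 < d.val) (h5 : d.val < 5) :
    FarD (W (t + d) j - W t j) ∨ FarD (W (t + d) k - W t k) := by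
  have hne : W (t + d) ≠ W t := by
    intro h
    have h' := congrFun h i
    rw [hi, hi, add_eq_left] at h'
    rw [h'] at h0
    simp at h0
  obtain ⟨l, hl⟩ := hB _ (hm (t + d)) _ (hm t) hne
  rcases hijk l with rfl | rfl | rfl
  · rw [hi, hi, add_sub_cancel_left] at hl
    exact absurd h5 (by revert hl; revert d; unfold FarD; intro d _ _ hl; omega)
  · exact Or.inl hl
  · exact Or.inr hl

lemma inv_three : ∀ t y c : ZMod 14, t = 3 * y + c → y = -1 * (9 * t) + 9 * c := by decide

lemma inv_neg_three : ∀ t y c : ZMod 14, t = -3 * y + c → y = 1 * (9 * t) + -9 * c := by decide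

/-- From both patterns of a coordinate change and its inverse we get linearity. -/
lemma lin_A (f g : ZMod 14 → ZMod 14) (hgf : ∀ t, g (f t) = t) (hf : PatA f)
    (hg : PatA g ∨ PatB g) :
    ∃ e c : ZMod 14, (e = 1 ∨ e = -1) ∧ ∀ t, f t = e * (3 * t) + c := by
  rcases hg with hg | hg
  · exact (not_patAA f g hgf hf hg).elim
  · obtain ⟨c, h | h⟩ := patA_linear f g hgf hf hg
    · exact ⟨1, c, Or.inl rfl, fun t => by rw [h t]; ring⟩
    · exact ⟨-1, c, Or.inr rfl, fun t => by rw [h t]; ring⟩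

lemma lin_B (f g : ZMod 14 → ZMod 14) (hgf : ∀ t, g (f t) = t) (hfg : ∀ t, f (g t) = t)
    (hf : PatB f) (hg : PatA g ∨ PatB g) :
    ∃ e c : ZMod 14, (e = 1 ∨ e = -1) ∧ ∀ t, f t = e * (9 * t) + c := by
  rcases hg with hg | hg
  · obtain ⟨c, h | h⟩ := patA_linear g f hfg hg hf
    · refine ⟨-1, 9 * c, Or.inr rfl, fun t => ?_⟩
      apply inv_three
      rw [← h, hgf]
    · refine ⟨1, -9 * c, Or.inl rfl, fun t => ?_⟩
      apply inv_neg_three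
      rw [← h, hgf]
  · exact (not_patBB f g hgf hf hg).elim

lemma lee_unique (B : Finset (Fin 3 → ZMod 14)) (hB : Indep B) (hc : B.card = 14) :
    ∃ (σ : Equiv.Perm (Fin 3)) (ε c : Fin 3 → ZMod 14),
      (∀ i, ε i = 1 ∨ ε i = -1) ∧
      B = codeA.image (fun a => fun i => ε i * a (σ i) + c i) := by
  obtain ⟨W0, m0, i0, r0⟩ := exists_param B hB hc 0
  obtain ⟨W1, m1, i1, r1⟩ := exists_param B hB hc 1
  obtain ⟨W2, m2, i2, r2⟩ := exists_param B hB hc 2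
  have p0 := pat_pair (fun t => W0 t 1) (fun t => W0 t 2)
    (param_far B hB W0 0 1 2 (by decide) m0 i0)
  have p1 := pat_pair (fun t => W1 t 0) (fun t => W1 t 2)
    (param_far B hB W1 1 0 2 (by decide) m1 i1)
  have p2 := pat_pair (fun t => W2 t 0) (fun t => W2 t 1)
    (param_far B hB W2 2 0 1 (by decide) m2 i2)
  have q1 : PatA (fun t => W1 t 0) ∨ PatB (fun t => W1 t 0) := by tauto
  have q2 : PatA (fun t => W2 t 0) ∨ PatB (fun t => W2 t 0) := by tauto
  have c01 : ∀ t, W1 (W0 t 1) 0 = t := fun t => by rw [r1 _ (m0 t), i0]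
  have c10 : ∀ t, W0 (W1 t 0) 1 = t := fun t => by rw [r0 _ (m1 t), i1]
  have c02 : ∀ t, W2 (W0 t 2) 0 = t := fun t => by rw [r2 _ (m0 t), i0]
  have c20 : ∀ t, W0 (W2 t 0) 2 = t := fun t => by rw [r0 _ (m2 t), i2]
  rcases p0 with ⟨hA, hBp⟩ | ⟨hBp, hA⟩
  · obtain ⟨e1, d1, he1, h1⟩ := lin_A _ (fun t => W1 t 0) c01 hA q1
    obtain ⟨e2, d2, he2, h2⟩ := lin_B _ (fun t => W2 t 0) c02 c20 hBp q2
    refine ⟨1, ![1, e1, e2], ![0, d1, d2], ?_, image_of_param B W0 m0 r0 _ _ _ ?_⟩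
    · intro i; fin_cases i
      · exact Or.inl rfl
      · exact he1
      · exact he2
    · intro t i; fin_cases i
      · simpa using i0 t
      · simpa using h1 t
      · simpa using h2 t
  · obtain ⟨e2, d2, he2, h2⟩ := lin_A _ (fun t => W2 t 0) c02 hA q2
    obtain ⟨e1, d1, he1, h1⟩ := lin_B _ (fun t => W1 t 0) c01 c10 hBp q1
    refine ⟨Equiv.swap 1 2, ![1, e1, e2], ![0, d1, d2], ?_, image_of_param B W0 m0 r0 _ _ _ ?_⟩
    · intro i; fin_cases i
      · exact Or.inl rfl
      · exact he1
      · exact he2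
    · intro t i; fin_cases i
      · have : (Equiv.swap 1 2 : Equiv.Perm (Fin 3)) 0 = 0 := by decide
        simpa [this] using i0 t
      · simpa using h1 t
      · simpa using h2 t

lemma codeA_far : ∀ s t : ZMod 14, s ≠ t →
    FarD (s - t) ∨ FarD (3 * s - 3 * t) ∨ FarD (9 * s - 9 * t) := by decide

/-- `A = { t·(1,3,9) : t ∈ ℤ/14ℤ }` is an independent set of cardinality 14 in
`C_{5,14}^{⊠3}`, `α(C_{5,14}^{⊠3}) = 14`, and any independent set `B` of
cardinality 14 in `C_{5,14}^{⊠3}` is Lee equivalent to `A`: it is obtained from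
`A` by permuting the three coordinates and applying, in each coordinate, a map
`x ↦ εx + c` with `ε ∈ {+1,-1}` and `c ∈ ℤ/14ℤ`. -/
theorem unique_independent_set_C_5_14 :
    (∀ u ∈ codeA, ∀ v ∈ codeA, u ≠ v → ∃ i : Fin 3, 5 ≤ circDist 14 (u i) (v i))
    ∧ codeA.card = 14
    ∧ (∀ S : Finset (Fin 3 → ZMod 14),
        (∀ u ∈ S, ∀ v ∈ S, u ≠ v → ∃ i : Fin 3, 5 ≤ circDist 14 (u i) (v i)) →
        S.card ≤ 14)
    ∧ (∀ B : Finset (Fin 3 → ZMod 14),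
        (∀ u ∈ B, ∀ v ∈ B, u ≠ v → ∃ i : Fin 3, 5 ≤ circDist 14 (u i) (v i)) →
        B.card = 14 →
        ∃ (σ : Equiv.Perm (Fin 3)) (ε c : Fin 3 → ZMod 14),
          (∀ i, ε i = 1 ∨ ε i = -1) ∧
          B = codeA.image (fun a => fun i => ε i * a (σ i) + c i)) := by
  simp only [far_iff]
  refine ⟨?_, ?_, card_le, lee_unique⟩
  · intro u hu v hv huv
    simp only [codeA, Finset.mem_image, Finset.mem_univ, true_and] at hu hv
    obtain ⟨s, rfl⟩ := hu
    obtain ⟨t, rfl⟩ := hv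
    have hst : s ≠ t := by rintro rfl; exact huv rfl
    rcases codeA_far s t hst with h | h | h
    · exact ⟨0, h⟩
    · exact ⟨1, h⟩
    · exact ⟨2, h⟩
  · unfold codeA
    rw [Finset.card_image_of_injective _ (fun s t h => congrFun h 0)]
    simp
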